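/- Let A ∈ ℝ^{m×r₁} with AᵀA = I_{r₁}, let A₃ ∈ ℝ^{p×r₃} with A₃ᵀA₃ = I_{r₃}, let G ∈ ℝ^{r₁×(r₃·r₂)}, let D ∈ ℝ^{m×r₂} be arbitrary, and let x ∈ ℝ^{p·m} (indexed by Fin p × Fin m). Then ‖A G (A₃ ⊗ D)ᵀ x‖₂ ≤ ‖G‖_F ‖D‖_F ‖x‖₂. -/

import Mathlib

open Matrix
open scoped Kronecker

/-- The Euclidean (ℓ²) norm of a real vector. -/
noncomputable def euclNorm {n : Type*} [Fintype n] (v : n → ℝ) : ℝ :=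
  Real.sqrt (∑ i, (v i) ^ 2)

/-- The Frobenius norm of a real matrix. -/
noncomputable def frobNorm {m n : Type*} [Fintype m] [Fintype n] (A : Matrix m n ℝ) : ℝ :=
  Real.sqrt (∑ i, ∑ j, (A i j) ^ 2)

/-!
The spectral norm is submultiplicative for the matrix product and for the Kronecker product, and it
is invariant under transposition. It is at most `1` on a matrix with orthonormal columns, and at
most the Frobenius norm on every real matrix. For the Kronecker product, `A ⊗ₖ B` is the matrix, in
orthonormal product bases, of the tensor product of the operators given by `A` and `B`.
-/

section Norms

open WithLp (toLp)

variable {m n : Type*} [Fintype m] [Fintype n]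

theorem euclNorm_eq_norm_toLp (v : n → ℝ) : euclNorm v = ‖toLp 2 v‖ := by
  simp only [euclNorm, EuclideanSpace.norm_eq, Real.norm_eq_abs, sq_abs]

theorem euclNorm_mulVec_le_frobNorm_mul (A : Matrix m n ℝ) (v : n → ℝ) :
    euclNorm (A *ᵥ v) ≤ frobNorm A * euclNorm v := by
  unfold euclNorm frobNorm
  rw [← Real.sqrt_mul (by positivity), Finset.sum_mul]
  gcongr with i
  exact Finset.sum_mul_sq_le_sq_mul_sq _ _ _

end Norms

section SpectralNorm

open scoped Matrix.Norms.L2Operator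
open LinearMap (toContinuousLinearMap)
open WithLp (toLp)

variable {𝕜 l m n p : Type*} [RCLike 𝕜] [Fintype l] [Fintype m] [Fintype n] [Fintype p]
  [DecidableEq n]

theorem euclNorm_mulVec_le_l2_opNorm_mul (A : Matrix m n ℝ) (v : n → ℝ) :
    euclNorm (A *ᵥ v) ≤ ‖A‖ * euclNorm v := by
  simp only [euclNorm_eq_norm_toLp]
  exact A.l2_opNorm_mulVec (toLp 2 v)

theorem l2_opNorm_le_frobNorm (A : Matrix m n ℝ) : ‖A‖ ≤ frobNorm A :=
  ContinuousLinearMap.opNorm_le_bound _ (Real.sqrt_nonneg _) fun v ↦ by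
    have mulVec_le := euclNorm_mulVec_le_frobNorm_mul A v.ofLp
    simp only [euclNorm_eq_norm_toLp] at mulVec_le
    exact mulVec_le

theorem l2_opNorm_transpose [DecidableEq m] (A : Matrix m n ℝ) : ‖Aᵀ‖ = ‖A‖ := by
  rw [← conjTranspose_eq_transpose_of_trivial, l2_opNorm_conjTranspose]

theorem l2_opNorm_le_one_of_conjTranspose_mul_self_eq_one {A : Matrix m n 𝕜} (hA : Aᴴ * A = 1) :
    ‖A‖ ≤ 1 := by
  have norm_mul_self_le_one : ‖A‖ * ‖A‖ ≤ 1 := by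
    rw [← l2_opNorm_conjTranspose_mul_self, hA, ← diagonal_one, l2_opNorm_diagonal]
    exact (pi_norm_le_iff_of_nonneg zero_le_one).2 fun _ ↦ norm_one.le
  nlinarith

theorem l2_opNorm_eq_norm_toLin {E F : Type*} [NormedAddCommGroup E] [InnerProductSpace 𝕜 E]
    [FiniteDimensional 𝕜 E] [NormedAddCommGroup F] [InnerProductSpace 𝕜 F]
    (b : OrthonormalBasis n 𝕜 E) (c : OrthonormalBasis m 𝕜 F) (A : Matrix m n 𝕜) :
    ‖A‖ = ‖toContinuousLinearMap (toLin b.toBasis c.toBasis A)‖ := by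
  have toLin_eq_comp : toContinuousLinearMap (toLin b.toBasis c.toBasis A) =
      (c.repr.symm : EuclideanSpace 𝕜 m →L[𝕜] F) ∘L
        (toContinuousLinearMap (toEuclideanLin A) ∘L (b.repr : E →L[𝕜] EuclideanSpace 𝕜 n)) := by
    ext v
    apply c.repr.injective
    ext i
    have repr_toLin := LinearMap.toMatrix_mulVec_repr b.toBasis c.toBasis
      (toLin b.toBasis c.toBasis A) v
    rw [LinearMap.toMatrix_toLin] at repr_toLin
    simpa using! (congrFun repr_toLin i).symm
  rw [toLin_eq_comp, ContinuousLinearMap.opNorm_linearIsometryEquiv_comp,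
    ContinuousLinearMap.opNorm_comp_linearIsometryEquiv, l2_opNorm_def]
  rfl

theorem l2_opNorm_kronecker_le [DecidableEq p] (A : Matrix m n 𝕜) (B : Matrix l p 𝕜) :
    ‖A ⊗ₖ B‖ ≤ ‖A‖ * ‖B‖ := by
  let f := toContinuousLinearMap (toEuclideanLin A)
  let g := toContinuousLinearMap (toEuclideanLin B)
  let b := (EuclideanSpace.basisFun n 𝕜).tensorProduct (EuclideanSpace.basisFun p 𝕜)
  let c := (EuclideanSpace.basisFun m 𝕜).tensorProduct (EuclideanSpace.basisFun l 𝕜)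
  have toLin_eq_mapL :
      toContinuousLinearMap (toLin b.toBasis c.toBasis (A ⊗ₖ B)) = TensorProduct.mapL f g := by
    apply ContinuousLinearMap.coe_injective
    simp [b, c, f, g, toLin_kronecker, toEuclideanLin_eq_toLin_orthonormal]
  calc ‖A ⊗ₖ B‖ = ‖TensorProduct.mapL f g‖ := by rw [← toLin_eq_mapL, l2_opNorm_eq_norm_toLin b c]
    _ ≤ ‖A‖ * ‖B‖ := TensorProduct.norm_mapL_le f g

theorem mulVec_kronecker_bound_general {r₁ r₂ r₃ : Type*} [Fintype r₁] [Fintype r₂] [Fintype r₃]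
    [DecidableEq r₁] [DecidableEq r₂] [DecidableEq r₃]
    (A : Matrix l r₁ ℝ) (A₃ : Matrix p r₃ ℝ) (G : Matrix r₁ (r₃ × r₂) ℝ) (D : Matrix m r₂ ℝ)
    (x : p × m → ℝ) :
    euclNorm ((A * G * (A₃ ⊗ₖ D)ᵀ).mulVec x) ≤ ‖A‖ * ‖G‖ * (‖A₃‖ * ‖D‖) * euclNorm x := by
  classical
  grw [euclNorm_mulVec_le_l2_opNorm_mul, l2_opNorm_mul, l2_opNorm_mul, l2_opNorm_transpose,
    l2_opNorm_kronecker_le] <;> exact Real.sqrt_nonneg _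

end SpectralNorm

/-- Key perturbation inequality: if `A` and `A₃` have orthonormal columns, then for
any `G`, `D`, and vector `x`, `‖A G (A₃ ⊗ D)ᵀ x‖₂ ≤ ‖G‖_F ‖D‖_F ‖x‖₂`. -/
theorem mulVec_kronecker_bound
    (m p r₁ r₂ r₃ : ℕ)
    (A : Matrix (Fin m) (Fin r₁) ℝ) (hA : Aᵀ * A = 1)
    (A₃ : Matrix (Fin p) (Fin r₃) ℝ) (hA₃ : A₃ᵀ * A₃ = 1)
    (G : Matrix (Fin r₁) (Fin r₃ × Fin r₂) ℝ)
    (D : Matrix (Fin m) (Fin r₂) ℝ)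
    (x : Fin p × Fin m → ℝ) :
    euclNorm ((A * G * (A₃ ⊗ₖ D)ᵀ).mulVec x) ≤ frobNorm G * frobNorm D * euclNorm x := by
  open scoped Matrix.Norms.L2Operator in
  grw [mulVec_kronecker_bound_general, l2_opNorm_le_one_of_conjTranspose_mul_self_eq_one hA,
    l2_opNorm_le_one_of_conjTranspose_mul_self_eq_one hA₃, one_mul, one_mul,
    l2_opNorm_le_frobNorm G, l2_opNorm_le_frobNorm D] <;> exact Real.sqrt_nonneg _
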